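/- Let Σ_A(ℕ) be a topologically mixing, finitely primitive (BIP) countable Markov shift, f : Σ_A(ℕ) → ℝ satisfying the Walters condition with Var_1 f < ∞ and P(f) < ∞, and for β > 0 let h_β be the Ruelle eigenfunction of L_{βf}. Then for every k ≥ 1, Var_k((1/β) log h_β) is bounded above by a constant M_k not depending on β, and lim_{k→∞} M_k = 0. -/

import Mathlib

open Filter Topology MeasureTheory
open scoped ENNReal

/-- The countable Markov shift over alphabet ℕ determined by the 0-1 matrix `A`. -/
def MarkovShift (A : ℕ → ℕ → Bool) : Type :=
  {x : ℕ → ℕ // ∀ i, A (x i) (x (i + 1)) = true}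

namespace MarkovShift

variable {A : ℕ → ℕ → Bool}

instance : TopologicalSpace (MarkovShift A) :=
  instTopologicalSpaceSubtype

instance : MeasurableSpace (MarkovShift A) := borel _

instance : BorelSpace (MarkovShift A) := ⟨rfl⟩

/-- The shift map. -/
def shift (x : MarkovShift A) : MarkovShift A :=
  ⟨fun n => x.1 (n + 1), fun i => x.2 (i + 1)⟩

/-- The cylinder set determined by a finite word. -/
def cylinder (w : List ℕ) : Set (MarkovShift A) :=
  {x | ∀ i : Fin w.length, x.1 i = w.get i}

/-- The cylinder set determined by the first `m` coordinates of `x`. -/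
def cylOf (x : MarkovShift A) (m : ℕ) : Set (MarkovShift A) :=
  {y | ∀ i < m, y.1 i = x.1 i}

/-- A symbol is admissible when its cylinder is nonempty. -/
def Admissible (A : ℕ → ℕ → Bool) (a : ℕ) : Prop :=
  ∃ x : MarkovShift A, x.1 0 = a

/-- Topologically mixing. -/
def TopologicallyMixing (A : ℕ → ℕ → Bool) : Prop :=
  ∀ a b : ℕ, Admissible A a → Admissible A b →
    ∃ N : ℕ, ∀ n ≥ N, ∃ x : MarkovShift A, x.1 0 = a ∧ (shift^[n] x).1 0 = b

/-- Finitely primitive (BIP). -/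
def FinitelyPrimitive (A : ℕ → ℕ → Bool) : Prop :=
  ∃ (K₀ : ℕ) (F : Finset ℕ), ∀ a b : ℕ, Admissible A a → Admissible A b →
    ∃ w : List ℕ, w.length = K₀ ∧ (∀ c ∈ w, c ∈ F) ∧
      List.Chain' (fun u v => A u v = true) (a :: (w ++ [b]))

/-- First coordinate where two distinct points disagree. -/
noncomputable def firstDiff (x y : MarkovShift A) (h : x ≠ y) : ℕ :=
  Nat.find (Function.ne_iff.mp (fun hxy : x.1 = y.1 => h (Subtype.ext hxy)))

open Classical in
/-- The metric `d(x,y) = r^{t(x,y)}`. -/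
noncomputable def dist' (r : ℝ) (x y : MarkovShift A) : ℝ :=
  if h : x = y then 0 else r ^ firstDiff x y h

/-- Birkhoff sum `S_n f`. -/
def birkhoff (f : MarkovShift A → ℝ) (n : ℕ) (x : MarkovShift A) : ℝ :=
  ∑ j ∈ Finset.range n, f (shift^[j] x)

/-- The set of values `|S_n f x - S_n f y|` over pairs agreeing on the first `m` coordinates. -/
def varSet (f : MarkovShift A → ℝ) (n m : ℕ) : Set ℝ :=
  {c | ∃ x y : MarkovShift A, (∀ i < m, x.1 i = y.1 i) ∧ c = |birkhoff f n x - birkhoff f n y|}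

/-- `Var_m (S_n f)`. -/
noncomputable def varBirk (f : MarkovShift A → ℝ) (n m : ℕ) : ℝ := sSup (varSet f n m)

/-- `Var_1 f < ∞`. -/
def Var1Finite (f : MarkovShift A → ℝ) : Prop := BddAbove (varSet f 1 1)

/-- The set whose supremum is `sup_{n ≥ 1} Var_{n+k}(S_n f)`. -/
def waltersSet (f : MarkovShift A → ℝ) (k : ℕ) : Set ℝ :=
  {c | ∃ n, 1 ≤ n ∧ c ∈ varSet f n (n + k)}

/-- `M_k = sup_{n ≥ 1} Var_{n+k}(S_n f)`. -/
noncomputable def waltersSup (f : MarkovShift A → ℝ) (k : ℕ) : ℝ := sSup (waltersSet f k)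

/-- The Walters condition. -/
def SatisfiesWalters (f : MarkovShift A → ℝ) : Prop :=
  (∀ k, 1 ≤ k → BddAbove (waltersSet f k)) ∧
    Tendsto (fun k => waltersSup f k) atTop (𝓝 0)

/-- The partition function `Z_n(f,a) = Σ_{σ^n x = x, x₀ = a} e^{S_n f (x)}`. -/
noncomputable def partitionSum (f : MarkovShift A → ℝ) (n : ℕ) (a : ℕ) : ℝ :=
  ∑' x : {x : MarkovShift A // shift^[n] x = x ∧ x.1 0 = a}, Real.exp (birkhoff f n x.1)

/-- `f` has (finite) Gurevich pressure `p`. -/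
def HasGurevichPressure (f : MarkovShift A → ℝ) (p : ℝ) : Prop :=
  ∀ a : ℕ, Admissible A a →
    (∀ n, 1 ≤ n → Summable fun x : {x : MarkovShift A // shift^[n] x = x ∧ x.1 0 = a} =>
        Real.exp (birkhoff f n x.1)) ∧
    Tendsto (fun n : ℕ => (1 / (n : ℝ)) * Real.log (partitionSum f n a)) atTop (𝓝 p)

/-- σ-invariant Borel probability measure. -/
def IsInvariantProb (μ : Measure (MarkovShift A)) : Prop :=
  IsProbabilityMeasure μ ∧ μ.map shift = μ

/-- `m(f)`, the maximal ergodic average. -/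
noncomputable def mf (f : MarkovShift A → ℝ) : ℝ :=
  sSup {c | ∃ μ : Measure (MarkovShift A),
    IsInvariantProb μ ∧ Integrable f μ ∧ ∫ x, f x ∂μ = c}

/-- A maximizing measure for `f`. -/
def IsMaximizing (f : MarkovShift A → ℝ) (μ : Measure (MarkovShift A)) : Prop :=
  IsInvariantProb μ ∧ Integrable f μ ∧ ∫ x, f x ∂μ = mf f

/-- Bounded real valued function. -/
def BoundedFun (g : MarkovShift A → ℝ) : Prop := ∃ C, ∀ x, |g x| ≤ C

/-- A bounded calibrated sub-action for `f`. -/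
def IsCalibratedSubaction (f V : MarkovShift A → ℝ) : Prop :=
  Continuous V ∧ BoundedFun V ∧
    (∀ x, f x + V x - V (shift x) - mf f ≤ 0) ∧
    (∀ y, ∃ x, shift x = y ∧ f x + V x - V (shift x) - mf f = 0)

/-- The Ruelle transfer operator `(L_g u)(x) = Σ_{σ y = x} e^{g(y)} u(y)`. -/
noncomputable def ruelle (g u : MarkovShift A → ℝ) (x : MarkovShift A) : ℝ :=
  ∑' y : {y : MarkovShift A // shift y = x}, Real.exp (g y.1) * u y.1

/-- Ruelle-Perron-Frobenius data for the potential `f` with pressure `p`: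
eigenfunction `h`, eigenmeasure `ν`. -/
def IsRPF (f : MarkovShift A → ℝ) (p : ℝ) (h : MarkovShift A → ℝ)
    (ν : Measure (MarkovShift A)) : Prop :=
  Continuous h ∧ (∀ x, 0 < h x) ∧
    (∀ x, ruelle f h x = Real.exp p * h x) ∧
    IsProbabilityMeasure ν ∧
    (∀ g : MarkovShift A → ℝ, Continuous g → BoundedFun g →
      ∫ x, ruelle f g x ∂ν = Real.exp p * ∫ x, g x ∂ν) ∧
    ∫ x, h x ∂ν = 1

/-- The Gibbs measure `dμ = h dν`. -/
noncomputable def gibbs (h : MarkovShift A → ℝ) (ν : Measure (MarkovShift A)) :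
    Measure (MarkovShift A) :=
  ν.withDensity fun x => ENNReal.ofReal (h x)

/-- The Mañé potential `S_f(x,y)` (with respect to the metric of parameter `r`). -/
noncomputable def manePot (r : ℝ) (f : MarkovShift A → ℝ) (x y : MarkovShift A) : EReal :=
  ⨅ ε : {ε : ℝ // 0 < ε}, ⨆ n : {n : ℕ // 1 ≤ n},
    ⨆ _z : {z : MarkovShift A // dist' r x z < ε.1 ∧ shift^[n.1] z = y},
      ((birkhoff (fun w => f w - mf f) n.1 _z.1 : ℝ) : EReal)

/-- The (topological) support of a measure. -/
def msupport (μ : Measure (MarkovShift A)) : Set (MarkovShift A) :=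
  {x | ∀ U : Set (MarkovShift A), IsOpen U → x ∈ U → 0 < μ U}

end MarkovShift

/-!
Write `L` for the transfer operator with weight `g = e^{βf}`, `c` for its eigenvalue and `ν` for the
eigenmeasure, and let `Hₙ` be the infimum of the eigenfunction `H` over cylinders of length `n`.
Then `c⁻ⁿ Lⁿ Hₙ ≤ c⁻ⁿ Lⁿ H = H`, while `∫ c⁻ⁿ Lⁿ Hₙ dν = ∫ Hₙ dν` increases to `∫ H dν` because
`H` is continuous; hence `supₙ c⁻ⁿ Lⁿ Hₙ = H` almost everywhere. Since `Hₙ` is constant on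
`n`-cylinders, each `c⁻ⁿ Lⁿ Hₙ` changes at most by the distortion factor `e^{β Var_{n+k}(Sₙ f)}`
between points with the same first `k` symbols, and the supremum inherits the bound. Finally `ν` has
full support by transitivity, so continuity of `H` carries the bound from almost every point to
every point.
-/

section TransferOperator

variable {X : Type*}

/-- The transfer operator `u ↦ (x ↦ ∑_{T y = x} g(y) u(y))` of a map `T` with weight `g`. Its values
are in `ℝ≥0∞`, so that the sum over the fibre needs no summability assumption. -/
noncomputable def transferOperator (T : X → X) (g u : X → ℝ≥0∞) (x : X) : ℝ≥0∞ :=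
  ∑' y : {y // T y = x}, g y * u y

theorem transferOperator_mono (T : X → X) (g : X → ℝ≥0∞) : Monotone (transferOperator T g) :=
  fun _ _ huv _ => ENNReal.tsum_le_tsum fun y => mul_le_mul_right (huv y.1) _

theorem transferOperator_const_mul (T : X → X) (g u : X → ℝ≥0∞) (c : ℝ≥0∞) :
    transferOperator T g (fun y => c * u y) = fun x => c * transferOperator T g u x := by
  funext x
  simp only [transferOperator, ← ENNReal.tsum_mul_left, mul_left_comm c]

theorem mul_le_transferOperator (T : X → X) (g u : X → ℝ≥0∞) (y : X) :
    g y * u y ≤ transferOperator T g u (T y) :=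
  ENNReal.le_tsum (f := fun z : {z // T z = T y} => g z * u z) ⟨y, rfl⟩

theorem transferOperator_le_mul_of_injective {T : X → X} {g u : X → ℝ≥0∞} {x x' : X} {K : ℝ≥0∞}
    {e : {y // T y = x} → {y // T y = x'}} (he : Function.Injective e)
    (h : ∀ y : {y // T y = x}, g y * u y ≤ K * (g (e y) * u (e y))) :
    transferOperator T g u x ≤ K * transferOperator T g u x' :=
  calc transferOperator T g u x
      ≤ ∑' y, K * (g (e y) * u (e y)) := ENNReal.tsum_le_tsum h
    _ = K * ∑' y, g (e y) * u (e y) := ENNReal.tsum_mul_left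
    _ ≤ K * transferOperator T g u x' := by
        gcongr
        exact ENNReal.tsum_comp_le_tsum_of_injective he fun y => g y * u y

theorem transferOperator_comp (S T : X → X) (f g u : X → ℝ≥0∞) :
    transferOperator S f (transferOperator T g u) =
      transferOperator (S ∘ T) (fun y => f (T y) * g y) u := by
  funext x
  let e := Equiv.sigmaSubtypeFiberEquivSubtype T (p := fun z => (S ∘ T) z = x)
    (q := fun y => S y = x) fun _ => Iff.rfl
  simp only [transferOperator, ← ENNReal.tsum_mul_left]
  rw [← ENNReal.tsum_sigma fun (y : {y // S y = x}) (z : {z // T z = y}) => f y * (g z * u z),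
    ← e.tsum_eq]
  refine tsum_congr fun ⟨y, z⟩ => ?_
  change f y * (g z * u z) = f (T z) * g z * u z
  rw [z.2, mul_assoc]

theorem iterate_transferOperator (T : X → X) (g : X → ℝ≥0∞) (n : ℕ) :
    (transferOperator T g)^[n] =
      transferOperator T^[n] (fun y => ∏ j ∈ Finset.range n, g (T^[j] y)) := by
  induction n with
  | zero =>
    funext u x
    refine ((tsum_eq_single ⟨x, rfl⟩ fun y hy => (hy (Subtype.ext y.2)).elim).trans ?_).symm
    simp
  | succ n ih =>
    funext u
    rw [Function.iterate_succ_apply', ih, transferOperator_comp, ← Function.iterate_succ']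
    simp only [Finset.prod_range_succ_comm]

theorem iterate_transferOperator_of_eigenfunction {T : X → X} {g H : X → ℝ≥0∞} {c : ℝ≥0∞}
    (hH : transferOperator T g H = fun x => c * H x) (n : ℕ) :
    (transferOperator T g)^[n] H = fun x => c ^ n * H x := by
  induction n with
  | zero => simp
  | succ n ih =>
    rw [Function.iterate_succ_apply', ih, transferOperator_const_mul, hH]
    simp only [pow_succ, mul_assoc]

theorem iterate_transferOperator_ne_zero {T : X → X} {g u : X → ℝ≥0∞} (hg : ∀ y, g y ≠ 0) {y : X}
    (hy : u y ≠ 0) (n : ℕ) : (transferOperator T g)^[n] u (T^[n] y) ≠ 0 := by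
  rw [iterate_transferOperator]
  have hweight : ∏ j ∈ Finset.range n, g (T^[j] y) ≠ 0 := Finset.prod_ne_zero_iff.2 fun j _ => hg _
  exact ((pos_iff_ne_zero.2 (mul_ne_zero hweight hy)).trans_le
    (mul_le_transferOperator T^[n] _ u y)).ne'

variable [MeasurableSpace X]

/-- The measure `∑_{T y = x} g(y) δ_y`, against which integration is evaluation of the transfer
operator at `x`. -/
noncomputable def fiberMeasure (T : X → X) (g : X → ℝ≥0∞) (x : X) : Measure X :=
  Measure.sum fun y : {y // T y = x} => g y • Measure.dirac y.1

theorem lintegral_fiberMeasure (T : X → X) (g : X → ℝ≥0∞) (x : X) {u : X → ℝ≥0∞}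
    (hu : Measurable u) : ∫⁻ y, u y ∂fiberMeasure T g x = transferOperator T g u x := by
  simp [fiberMeasure, transferOperator, lintegral_sum_measure, lintegral_dirac' _ hu]

theorem fiberMeasure_apply (T : X → X) (g : X → ℝ≥0∞) (x : X) {s : Set X} (hs : MeasurableSet s) :
    fiberMeasure T g x s = transferOperator T g (s.indicator 1) x := by
  rw [← lintegral_fiberMeasure T g x (measurable_one.indicator hs), lintegral_indicator_one hs]

/-- `ν` is an eigenmeasure, with eigenvalue `c`, of the dual of the transfer operator. -/
def IsEigenmeasure (T : X → X) (g : X → ℝ≥0∞) (c : ℝ≥0∞) (ν : Measure X) : Prop :=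
  ∀ u : X → ℝ≥0∞, Measurable u → ∫⁻ x, transferOperator T g u x ∂ν = c * ∫⁻ x, u x ∂ν

theorem isEigenmeasure_of_isTopologicalBasis [TopologicalSpace X] [SecondCountableTopology X]
    [BorelSpace X] {T : X → X} {g : X → ℝ≥0∞} {c : ℝ≥0∞} (hc : c ≠ ∞) {ν : Measure X}
    [IsFiniteMeasure ν] (hT : ∀ u, Measurable u → Measurable (transferOperator T g u))
    {S : Set (Set X)} (hS : TopologicalSpace.IsTopologicalBasis S) (hpi : IsPiSystem S)
    (h : ∀ s ∈ S, ∫⁻ x, transferOperator T g (s.indicator 1) x ∂ν = c * ν s) :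
    IsEigenmeasure T g c ν := by
  have hmeas : Measurable (fiberMeasure T g) :=
    Measure.measurable_of_measurable_coe _ fun s hs => by
      simpa only [fiberMeasure_apply T g _ hs] using hT _ (measurable_one.indicator hs)
  obtain ⟨B, hBc, hBS, hB⟩ := TopologicalSpace.isOpen_sUnion_countable S fun s hs => hS.isOpen hs
  have hdual : c • ν = ν.bind (fiberMeasure T g) := by
    refine Measure.ext_of_generateFrom_of_cover_subset
      ((BorelSpace.measurable_eq).trans hS.borel_eq_generateFrom) hpi hBS hBc
      (hB.trans hS.sUnion_eq) (fun s _ => ENNReal.mul_ne_top hc (measure_ne_top ν s)) fun s hs => ?_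
    have hsm := (hS.isOpen hs).measurableSet
    rw [Measure.bind_apply hsm hmeas.aemeasurable]
    simpa only [fiberMeasure_apply T g _ hsm, Measure.smul_apply, smul_eq_mul] using (h s hs).symm
  intro u hu
  calc ∫⁻ x, transferOperator T g u x ∂ν
      = ∫⁻ x, ∫⁻ y, u y ∂fiberMeasure T g x ∂ν := by simp only [lintegral_fiberMeasure T g _ hu]
    _ = ∫⁻ x, u x ∂(c • ν) := by
        rw [hdual, Measure.lintegral_bind hmeas.aemeasurable hu.aemeasurable]
    _ = c * ∫⁻ x, u x ∂ν := lintegral_smul_measure _ _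

end TransferOperator

namespace MarkovShift

variable {A : ℕ → ℕ → Bool}

section Symbolic

theorem iterate_shift_apply (n : ℕ) (x : MarkovShift A) (i : ℕ) :
    (shift^[n] x).1 i = x.1 (i + n) := by
  induction n generalizing x with
  | zero => rfl
  | succ _ ih => exact ih (shift x)

theorem eq_of_iterate_shift_eq {n : ℕ} {x y : MarkovShift A} (hlt : ∀ i < n, x.1 i = y.1 i)
    (hshift : shift^[n] x = shift^[n] y) : x = y := by
  refine Subtype.ext (funext fun i => ?_)
  rcases lt_or_ge i n with hi | hi
  · exact hlt i hi
  · rw [← Nat.sub_add_cancel hi, ← iterate_shift_apply, ← iterate_shift_apply, hshift]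

theorem mem_cylOf_add_iff {n k : ℕ} {x y : MarkovShift A} :
    y ∈ cylOf x (n + k) ↔ y ∈ cylOf x n ∧ shift^[n] y ∈ cylOf (shift^[n] x) k := by
  simp only [cylOf, Set.mem_ofPred_eq, iterate_shift_apply]
  refine ⟨fun h => ⟨fun i hi => h i (by lia), fun i hi => h (i + n) (by lia)⟩, fun h i hi => ?_⟩
  rcases lt_or_ge i n with hin | hin
  · exact h.1 i hin
  · simpa only [Nat.sub_add_cancel hin] using h.2 (i - n) (by lia)

theorem mem_cylOf_self (x : MarkovShift A) (m : ℕ) : x ∈ cylOf x m := fun _ _ => rfl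

theorem cylOf_antitone (x : MarkovShift A) : Antitone (cylOf x) :=
  fun _ _ hmn _ hy i hi => hy i (hi.trans_le hmn)

theorem cylOf_eq_of_mem {x y : MarkovShift A} {m : ℕ} (h : y ∈ cylOf x m) :
    cylOf y m = cylOf x m :=
  Set.ext fun _ => forall₂_congr fun i hi => by rw [h i hi]

/-- The inverse branch of the shift which prepends the symbol `a`. To be total, it is the identity
at points `x` for which `a x` is not admissible. -/
def cons (a : ℕ) (x : MarkovShift A) : MarkovShift A :=
  if h : A a (x.1 0) then ⟨fun i => Nat.casesOn i a x.1, fun i => Nat.casesOn i h x.2⟩ else x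

theorem cons_zero {a : ℕ} {x : MarkovShift A} (h : A a (x.1 0)) : (cons a x).1 0 = a := by
  simp [cons, h]

theorem shift_cons {a : ℕ} {x : MarkovShift A} (h : A a (x.1 0)) : shift (cons a x) = x := by
  refine Subtype.ext (funext fun i => ?_)
  simp [cons, shift, h]

theorem cons_shift (x : MarkovShift A) : cons (x.1 0) (shift x) = x :=
  have h : A (x.1 0) ((shift x).1 0) := x.2 0
  eq_of_iterate_shift_eq (n := 1)
    (fun i hi => by rw [Nat.lt_one_iff.1 hi, cons_zero h]) (shift_cons h)

theorem exists_iterate_shift_eq {n : ℕ} {z x : MarkovShift A} (h : z.1 n = x.1 0) :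
    ∃ y ∈ cylOf z (n + 1), shift^[n] y = x := by
  induction n generalizing z with
  | zero => exact ⟨x, fun i hi => by rw [Nat.lt_one_iff.1 hi, h], rfl⟩
  | succ n ih =>
    obtain ⟨y, hy, rfl⟩ := ih (z := shift z) h
    have hadm : A (z.1 0) (y.1 0) := by
      rw [hy 0 n.succ_pos]
      exact z.2 0
    refine ⟨cons (z.1 0) y, ?_, congrArg _ (shift_cons hadm)⟩
    rw [add_comm, mem_cylOf_add_iff]
    exact ⟨fun i hi => by rw [Nat.lt_one_iff.1 hi, cons_zero hadm],
      by rwa [Function.iterate_one, shift_cons hadm]⟩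

/-- Topological transitivity, i.e. irreducibility of `A` on the admissible symbols. -/
def TopologicallyTransitive (A : ℕ → ℕ → Bool) : Prop :=
  ∀ a b : ℕ, Admissible A a → Admissible A b →
    ∃ n, ∃ x : MarkovShift A, x.1 0 = a ∧ (shift^[n] x).1 0 = b

theorem TopologicallyMixing.topologicallyTransitive (h : TopologicallyMixing A) :
    TopologicallyTransitive A := fun a b ha hb =>
  let ⟨N, hN⟩ := h a b ha hb
  ⟨N, hN N le_rfl⟩

theorem TopologicallyTransitive.exists_mem_cylOf_iterate_shift_eq (hA : TopologicallyTransitive A)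
    (z x : MarkovShift A) (m : ℕ) : ∃ n, ∃ y ∈ cylOf z m, shift^[n] y = x := by
  obtain ⟨n, p, hpz, hpx⟩ := hA (z.1 m) (x.1 0)
    ⟨shift^[m] z, by rw [iterate_shift_apply, zero_add]⟩ ⟨x, rfl⟩
  rw [iterate_shift_apply, zero_add] at hpx
  obtain ⟨q, hqp, rfl⟩ := exists_iterate_shift_eq hpx
  obtain ⟨y, hyz, rfl⟩ := exists_iterate_shift_eq (hpz.symm.trans (hqp 0 n.succ_pos).symm)
  exact ⟨n + m, y, cylOf_antitone z m.le_succ hyz, Function.iterate_add_apply _ _ _ _⟩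

end Symbolic

section Topology

instance : SecondCountableTopology (MarkovShift A) :=
  TopologicalSpace.Subtype.secondCountableTopology _

theorem continuous_coord (i : ℕ) : Continuous fun x : MarkovShift A => x.1 i :=
  (continuous_apply i).comp continuous_subtype_val

theorem isClopen_setOf_coord (p : ℕ → Prop) (i : ℕ) : IsClopen {x : MarkovShift A | p (x.1 i)} :=
  (isClopen_discrete {a | p a}).preimage (continuous_coord i)

theorem isClopen_cylOf (x : MarkovShift A) (m : ℕ) : IsClopen (cylOf x m) := by
  have : cylOf x m = ⋂ i ∈ Finset.range m, {y | y.1 i = x.1 i} := by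
    ext y
    simp [cylOf]
  rw [this]
  exact isClopen_biInter_finset fun i _ => isClopen_setOf_coord (· = x.1 i) i

theorem exists_cylOf_subset {U : Set (MarkovShift A)} (hU : IsOpen U) {x : MarkovShift A}
    (hx : x ∈ U) : ∃ m, cylOf x m ⊆ U := by
  obtain ⟨V, hV, rfl⟩ := isOpen_induced_iff.1 hU
  obtain ⟨I, u, hu, hIu⟩ := isOpen_pi_iff.1 hV x.1 hx
  refine ⟨I.sup id + 1, fun y hy => hIu fun i hi => ?_⟩
  rw [hy i (Nat.lt_succ_of_le (Finset.le_sup (f := id) hi))]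
  exact (hu i hi).2

theorem continuous_cons (a : ℕ) : Continuous (cons a : MarkovShift A → MarkovShift A) := by
  refine continuous_induced_rng.2 (continuous_pi fun i => ?_)
  have hcoord : (fun x : MarkovShift A => (cons a x).1 i) =
      fun x => if A a (x.1 0) then (Nat.casesOn i a x.1 : ℕ) else x.1 i := by
    funext x
    by_cases h : A a (x.1 0) <;> simp [cons, h]
  refine (Continuous.if ?_ ?_ (continuous_coord i)).congr fun x => (congrFun hcoord x).symm
  · simp [(isClopen_setOf_coord (fun b => A a b = true) 0).frontier_eq]
  · cases i with
    | zero => exact continuous_const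
    | succ j => exact continuous_coord j

/-- The nonempty-word cylinders on which `φ` is bounded above. The Ruelle operator of `φ` maps their
indicators to bounded functions. -/
def boundedCylinders (φ : MarkovShift A → ℝ) : Set (Set (MarkovShift A)) :=
  {C | ∃ z m, C = cylOf z (m + 1) ∧ BddAbove (φ '' C)}

theorem isTopologicalBasis_boundedCylinders {φ : MarkovShift A → ℝ} (hφ : Continuous φ) :
    TopologicalSpace.IsTopologicalBasis (boundedCylinders φ) := by
  refine TopologicalSpace.isTopologicalBasis_of_isOpen_of_nhds ?_ fun x U hxU hU => ?_
  · rintro _ ⟨z, m, rfl, -⟩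
    exact (isClopen_cylOf z _).isOpen
  · have hV : IsOpen (U ∩ {y | φ y < φ x + 1}) := hU.inter (isOpen_lt hφ continuous_const)
    obtain ⟨m, hm⟩ := exists_cylOf_subset hV ⟨hxU, lt_add_one (φ x)⟩
    replace hm := (cylOf_antitone x m.le_succ).trans hm
    exact ⟨_, ⟨x, m, rfl, φ x + 1, Set.forall_mem_image.2 fun y hy => (hm hy).2.le⟩,
      mem_cylOf_self x _, fun y hy => (hm hy).1⟩

theorem isPiSystem_boundedCylinders (φ : MarkovShift A → ℝ) : IsPiSystem (boundedCylinders φ) := by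
  rintro _ ⟨z, m, rfl, hbdd⟩ _ ⟨z', m', rfl, -⟩ ⟨w, hw, hw'⟩
  refine ⟨w, max m m', ?_, hbdd.mono (Set.image_mono Set.inter_subset_left)⟩
  rw [← cylOf_eq_of_mem hw, ← cylOf_eq_of_mem hw']
  rcases le_total m m' with h | h
  · rw [max_eq_right h, Set.inter_eq_right.2 (cylOf_antitone w (by lia))]
  · rw [max_eq_left h, Set.inter_eq_left.2 (cylOf_antitone w (by lia))]

end Topology

section ShiftOperator

theorem transferOperator_shift (g u : MarkovShift A → ℝ≥0∞) (x : MarkovShift A) :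
    transferOperator shift g u x =
      ∑' a, if A a (x.1 0) then g (cons a x) * u (cons a x) else 0 := by
  let e : {a // A a (x.1 0)} ≃ {y : MarkovShift A // shift y = x} :=
    { toFun := fun a => ⟨cons a.1 x, shift_cons a.2⟩
      invFun := fun y => ⟨y.1.1 0, by
        have h : A (y.1.1 0) ((shift y.1).1 0) := y.1.2 0
        rwa [y.2] at h⟩
      left_inv := fun a => Subtype.ext (cons_zero a.2)
      right_inv := by
        rintro ⟨y, rfl⟩
        exact Subtype.ext (cons_shift y) }
  rw [transferOperator, ← e.tsum_eq]
  exact (tsum_subtype {a | A a (x.1 0)} fun a => g (cons a x) * u (cons a x)).trans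
    (tsum_congr fun a => by simp [Set.indicator_apply])

theorem measurable_transferOperator_shift {g u : MarkovShift A → ℝ≥0∞} (hg : Measurable g)
    (hu : Measurable u) : Measurable (transferOperator shift g u) := by
  simp only [funext (transferOperator_shift g u)]
  exact Measurable.tsum fun a =>
    Measurable.ite (isClopen_setOf_coord (fun b => A a b = true) 0).isOpen.measurableSet
      ((hg.mul hu).comp (continuous_cons a).measurable) measurable_const

theorem measurable_iterate_transferOperator_shift {g u : MarkovShift A → ℝ≥0∞} (hg : Measurable g)
    (hu : Measurable u) (n : ℕ) : Measurable ((transferOperator shift g)^[n] u) := by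
  induction n with
  | zero => exact hu
  | succ n ih =>
    rw [Function.iterate_succ_apply']
    exact measurable_transferOperator_shift hg ih

theorem transferOperator_shift_indicator_le {g : MarkovShift A → ℝ≥0∞} {C : Set (MarkovShift A)}
    {a : ℕ} {B : ℝ≥0∞} (hC : ∀ y ∈ C, y.1 0 = a) (hg : ∀ y ∈ C, g y ≤ B) (x : MarkovShift A) :
    transferOperator shift g (C.indicator 1) x ≤ B := by
  rw [transferOperator_shift, ← tsum_ite_eq a fun _ => B]
  refine ENNReal.tsum_le_tsum fun b => ?_
  by_cases hb : A b (x.1 0) ∧ cons b x ∈ C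
  · have hba : b = a := (cons_zero hb.1).symm.trans (hC _ hb.2)
    simpa [hb, ← hba] using hg _ hb.2
  · simp_all

theorem iterate_transferOperator_shift_le_mul {g u : MarkovShift A → ℝ≥0∞} {K : ℝ≥0∞} {n k : ℕ}
    (hk : 1 ≤ k)
    (h : ∀ z z', z' ∈ cylOf z (n + k) → (∏ j ∈ Finset.range n, g (shift^[j] z)) * u z ≤
      K * ((∏ j ∈ Finset.range n, g (shift^[j] z')) * u z'))
    {x y : MarkovShift A} (hxy : y ∈ cylOf x k) :
    (transferOperator shift g)^[n] u x ≤ K * (transferOperator shift g)^[n] u y := by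
  have hlift : ∀ z : {z // shift^[n] z = x}, ∃ w : {w // shift^[n] w = y}, w.1 ∈ cylOf z.1 n := by
    rintro ⟨z, rfl⟩
    have hzy : z.1 n = y.1 0 := by rw [hxy 0 hk, iterate_shift_apply, zero_add]
    obtain ⟨w, hw, hwy⟩ := exists_iterate_shift_eq hzy
    exact ⟨⟨w, hwy⟩, cylOf_antitone z n.le_succ hw⟩
  choose e he using hlift
  rw [iterate_transferOperator]
  refine transferOperator_le_mul_of_injective (e := e) (fun z z' hzz' => Subtype.ext ?_)
    fun z => h _ _ (mem_cylOf_add_iff.2 ⟨he z, by rwa [z.2, (e z).2]⟩)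
  refine eq_of_iterate_shift_eq (fun i hi => ?_) (z.2.trans z'.2.symm)
  rw [← he z i hi, ← he z' i hi, hzz']

end ShiftOperator

section Eigenmeasure

variable {g : MarkovShift A → ℝ≥0∞} {c : ℝ≥0∞} {ν : Measure (MarkovShift A)}

theorem lintegral_iterate_transferOperator (hg : Measurable g) (hν : IsEigenmeasure shift g c ν)
    {u : MarkovShift A → ℝ≥0∞} (hu : Measurable u) (n : ℕ) :
    ∫⁻ x, (transferOperator shift g)^[n] u x ∂ν = c ^ n * ∫⁻ x, u x ∂ν := by
  induction n with
  | zero => simp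
  | succ n ih =>
    rw [Function.iterate_succ_apply', hν _ (measurable_iterate_transferOperator_shift hg hu n), ih,
      pow_succ', mul_assoc]

theorem isOpenPosMeasure_of_isEigenmeasure (hA : TopologicallyTransitive A) (hg : Measurable g)
    (hpos : ∀ y, g y ≠ 0) [NeZero ν] (hν : IsEigenmeasure shift g c ν) : ν.IsOpenPosMeasure := by
  refine ⟨fun U hU ⟨z, hz⟩ hνU => ?_⟩
  obtain ⟨m, hm⟩ := exists_cylOf_subset hU hz
  have hCm : MeasurableSet (cylOf z m) := (isClopen_cylOf z m).isOpen.measurableSet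
  have hum : Measurable ((cylOf z m).indicator (1 : MarkovShift A → ℝ≥0∞)) :=
    measurable_one.indicator hCm
  have hzero : ∀ n, (transferOperator shift g)^[n] ((cylOf z m).indicator 1) =ᵐ[ν] 0 := fun n => by
    rw [← lintegral_eq_zero_iff (measurable_iterate_transferOperator_shift hg hum n),
      lintegral_iterate_transferOperator hg hν hum, lintegral_indicator_one hCm,
      measure_mono_null hm hνU, mul_zero]
  obtain ⟨x, hx⟩ := (ae_all_iff.2 hzero).exists
  obtain ⟨n, y, hy, rfl⟩ := hA.exists_mem_cylOf_iterate_shift_eq z x m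
  exact iterate_transferOperator_ne_zero hpos (by simp [hy]) n (hx n)

end Eigenmeasure

section Approximation

/-- The infimum of `H` over the cylinder of length `N` around `x`. -/
noncomputable def cylInf (H : MarkovShift A → ℝ≥0∞) (N : ℕ) (x : MarkovShift A) : ℝ≥0∞ :=
  ⨅ y ∈ cylOf x N, H y

theorem cylInf_congr (H : MarkovShift A → ℝ≥0∞) {N : ℕ} {x y : MarkovShift A}
    (h : y ∈ cylOf x N) : cylInf H N y = cylInf H N x := by
  rw [cylInf, cylInf, cylOf_eq_of_mem h]

theorem measurable_cylInf (H : MarkovShift A → ℝ≥0∞) (N : ℕ) : Measurable (cylInf H N) :=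
  ((IsLocallyConstant.iff_exists_open _).2 fun x => ⟨cylOf x N, (isClopen_cylOf x N).isOpen,
    mem_cylOf_self x N, fun _ hy => cylInf_congr H hy⟩).continuous.measurable

theorem cylInf_le (H : MarkovShift A → ℝ≥0∞) (N : ℕ) : cylInf H N ≤ H :=
  fun x => iInf₂_le x (mem_cylOf_self x N)

theorem cylInf_mono (H : MarkovShift A → ℝ≥0∞) : Monotone (cylInf H) :=
  fun _ _ hNM x => biInf_mono fun _ hy => cylOf_antitone x hNM hy

theorem iSup_cylInf {H : MarkovShift A → ℝ≥0∞} (hH : Continuous H) (x : MarkovShift A) :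
    ⨆ N, cylInf H N x = H x := by
  refine le_antisymm (iSup_le fun N => cylInf_le H N x) (le_of_forall_lt fun a ha => ?_)
  obtain ⟨b, hab, hb⟩ := exists_between ha
  obtain ⟨m, hm⟩ := exists_cylOf_subset ((isOpen_Ioi (a := b)).preimage hH) hb
  have hbm : b ≤ cylInf H m x := le_iInf₂ fun y hy => (hm hy).le
  exact hab.trans_le (hbm.trans (le_iSup (fun N => cylInf H N x) m))

/-- `c⁻ⁿ Lⁿ` applied to the infimum of `H` over cylinders of length `n`. If `H` is an eigenfunction
of `L` with eigenvalue `c`, this approximates `H` from below. -/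
noncomputable def lowerApprox (g : MarkovShift A → ℝ≥0∞) (c : ℝ≥0∞) (H : MarkovShift A → ℝ≥0∞)
    (n : ℕ) (x : MarkovShift A) : ℝ≥0∞ :=
  (c ^ n)⁻¹ * (transferOperator shift g)^[n] (cylInf H n) x

variable {g : MarkovShift A → ℝ≥0∞} {c : ℝ≥0∞} {H : MarkovShift A → ℝ≥0∞}
  {ν : Measure (MarkovShift A)}

theorem lowerApprox_le (hc0 : c ≠ 0) (hc : c ≠ ∞)
    (hH : transferOperator shift g H = fun x => c * H x) (n : ℕ) : lowerApprox g c H n ≤ H := by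
  intro x
  calc lowerApprox g c H n x
      ≤ (c ^ n)⁻¹ * (transferOperator shift g)^[n] H x :=
        mul_le_mul_right ((transferOperator_mono shift g).iterate n (cylInf_le H n) x) _
    _ = H x := by
        rw [iterate_transferOperator_of_eigenfunction hH,
          ENNReal.inv_mul_cancel_left (pow_ne_zero n hc0) (ENNReal.pow_ne_top hc)]

theorem lintegral_lowerApprox (hg : Measurable g) (hc0 : c ≠ 0) (hc : c ≠ ∞)
    (hν : IsEigenmeasure shift g c ν) (n : ℕ) :
    ∫⁻ x, lowerApprox g c H n x ∂ν = ∫⁻ x, cylInf H n x ∂ν := by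
  have hm := measurable_cylInf H n
  simp only [lowerApprox]
  rw [lintegral_const_mul _ (measurable_iterate_transferOperator_shift hg hm n),
    lintegral_iterate_transferOperator hg hν hm,
    ENNReal.inv_mul_cancel_left (pow_ne_zero n hc0) (ENNReal.pow_ne_top hc)]

theorem iSup_lowerApprox_ae_eq (hg : Measurable g) (hc0 : c ≠ 0) (hc : c ≠ ∞)
    (hν : IsEigenmeasure shift g c ν) (hHcont : Continuous H) (hHν : ∫⁻ x, H x ∂ν ≠ ∞)
    (hH : transferOperator shift g H = fun x => c * H x) :
    (fun x => ⨆ n, lowerApprox g c H n x) =ᵐ[ν] H := by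
  have hle : ∀ x, ⨆ n, lowerApprox g c H n x ≤ H x :=
    fun x => iSup_le fun n => lowerApprox_le hc0 hc hH n x
  refine ae_eq_of_ae_le_of_lintegral_le (ae_of_all _ hle)
    (ne_top_of_le_ne_top hHν (lintegral_mono hle)) hHcont.measurable.aemeasurable ?_
  calc ∫⁻ x, H x ∂ν
      = ∫⁻ x, ⨆ n, cylInf H n x ∂ν := by simp only [iSup_cylInf hHcont]
    _ = ⨆ n, ∫⁻ x, lowerApprox g c H n x ∂ν := by
        rw [lintegral_iSup (measurable_cylInf H) (cylInf_mono H)]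
        simp only [lintegral_lowerApprox hg hc0 hc hν]
    _ ≤ ∫⁻ x, ⨆ n, lowerApprox g c H n x ∂ν :=
        iSup_le fun n => lintegral_mono fun x => le_iSup (fun n => lowerApprox g c H n x) n

theorem lowerApprox_le_mul {K : ℝ≥0∞} {k : ℕ} (hk : 1 ≤ k) {n : ℕ}
    (hK : ∀ z z', z' ∈ cylOf z (n + k) →
      ∏ j ∈ Finset.range n, g (shift^[j] z) ≤ K * ∏ j ∈ Finset.range n, g (shift^[j] z'))
    {x y : MarkovShift A} (hxy : y ∈ cylOf x k) :
    lowerApprox g c H n x ≤ K * lowerApprox g c H n y := by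
  rw [lowerApprox, lowerApprox, mul_left_comm]
  gcongr
  refine iterate_transferOperator_shift_le_mul hk (fun z z' hz => ?_) hxy
  rw [← mul_assoc, cylInf_congr H (cylOf_antitone z (Nat.le_add_right n k) hz)]
  gcongr
  exact hK z z' hz

theorem le_mul_of_dense {D : Set (MarkovShift A)} (hD : Dense D) (hH : Continuous H) {K : ℝ≥0∞}
    (hK : K ≠ ∞) {k : ℕ} (h : ∀ x ∈ D, ∀ y ∈ D, y ∈ cylOf x k → H x ≤ K * H y)
    {x y : MarkovShift A} (hxy : y ∈ cylOf x k) : H x ≤ K * H y := by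
  have hKH : Continuous fun z => K * H z := (ENNReal.continuous_const_mul hK).comp hH
  have hcyl : cylOf x k ⊆ closure (cylOf x k ∩ D) :=
    hD.open_subset_closure_inter (isClopen_cylOf x k).isOpen
  have hle : ∀ z ∈ cylOf x k ∩ D, H z ≤ K * H y := fun z hz =>
    le_on_closure (fun w hw => h z hz.2 w hw.2 (cylOf_eq_of_mem hz.1 ▸ hw.1))
      continuousOn_const hKH.continuousOn (hcyl hxy)
  exact le_on_closure hle hH.continuousOn continuousOn_const (hcyl (mem_cylOf_self x k))

theorem eigenfunction_le_mul (hA : TopologicallyTransitive A) (hg : Measurable g)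
    (hpos : ∀ y, g y ≠ 0) (hc0 : c ≠ 0) (hc : c ≠ ∞) [NeZero ν] (hν : IsEigenmeasure shift g c ν)
    (hHcont : Continuous H) (hHν : ∫⁻ x, H x ∂ν ≠ ∞)
    (hH : transferOperator shift g H = fun x => c * H x) {K : ℝ≥0∞} (hK : K ≠ ∞)
    {k : ℕ} (hk : 1 ≤ k)
    (hgK : ∀ n z z', z' ∈ cylOf z (n + k) →
      ∏ j ∈ Finset.range n, g (shift^[j] z) ≤ K * ∏ j ∈ Finset.range n, g (shift^[j] z'))
    {x y : MarkovShift A} (hxy : y ∈ cylOf x k) : H x ≤ K * H y := by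
  have := isOpenPosMeasure_of_isEigenmeasure hA hg hpos hν
  refine le_mul_of_dense
    (Measure.dense_of_ae (iSup_lowerApprox_ae_eq hg hc0 hc hν hHcont hHν hH)) hHcont hK
    (fun z hz w hw hzw => ?_) hxy
  rw [← hz, ← hw, ENNReal.mul_iSup]
  exact iSup_mono fun n => lowerApprox_le_mul hk (hgK n) hzw

end Approximation

section Ruelle

/-- The weight `e^φ` of the Ruelle operator of `φ`, with values in `ℝ≥0∞`. -/
noncomputable def expWeight (φ : MarkovShift A → ℝ) (x : MarkovShift A) : ℝ≥0∞ :=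
  ENNReal.ofReal (Real.exp (φ x))

variable {φ : MarkovShift A → ℝ}

theorem measurable_expWeight (hφ : Continuous φ) : Measurable (expWeight φ) :=
  hφ.measurable.exp.ennreal_ofReal

theorem expWeight_ne_zero (φ : MarkovShift A → ℝ) (x : MarkovShift A) : expWeight φ x ≠ 0 :=
  (ENNReal.ofReal_pos.2 (Real.exp_pos _)).ne'

theorem prod_expWeight (φ : MarkovShift A → ℝ) (n : ℕ) (x : MarkovShift A) :
    ∏ j ∈ Finset.range n, expWeight φ (shift^[j] x) =
      ENNReal.ofReal (Real.exp (birkhoff φ n x)) := by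
  rw [birkhoff, Real.exp_sum, ENNReal.ofReal_prod_of_nonneg fun _ _ => (Real.exp_pos _).le]
  rfl

-- Both sides vanish when the series defining `ruelle` diverges.
theorem ruelle_eq_toReal (φ : MarkovShift A → ℝ) {u : MarkovShift A → ℝ} (hu : ∀ x, 0 ≤ u x)
    (x : MarkovShift A) :
    ruelle φ u x =
      (transferOperator shift (expWeight φ) (fun y => ENNReal.ofReal (u y)) x).toReal := by
  simp only [transferOperator, expWeight]
  rw [ENNReal.tsum_toReal_eq
    fun y => ENNReal.mul_ne_top ENNReal.ofReal_ne_top ENNReal.ofReal_ne_top]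
  simp [ruelle, ENNReal.toReal_ofReal, Real.exp_nonneg, hu]

theorem transferOperator_expWeight_of_ruelle_eigenfunction {h : MarkovShift A → ℝ} {p : ℝ}
    (hpos : ∀ x, 0 < h x) (hh : ∀ x, ruelle φ h x = Real.exp p * h x) :
    transferOperator shift (expWeight φ) (fun x => ENNReal.ofReal (h x)) =
      fun x => ENNReal.ofReal (Real.exp p) * ENNReal.ofReal (h x) := by
  funext x
  have hreal := (ruelle_eq_toReal φ (fun y => (hpos y).le) x).symm.trans (hh x)
  have hne : (transferOperator shift (expWeight φ) (fun y => ENNReal.ofReal (h y)) x).toReal ≠ 0 :=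
    hreal ▸ (mul_pos (Real.exp_pos p) (hpos x)).ne'
  rw [← ENNReal.ofReal_mul (Real.exp_nonneg p), ← hreal,
    ENNReal.ofReal_toReal (ENNReal.toReal_ne_zero.1 hne).2]

theorem lintegral_transferOperator_expWeight_indicator (hφ : Continuous φ) {p : ℝ}
    {ν : Measure (MarkovShift A)} [IsFiniteMeasure ν]
    (hν : ∀ u, Continuous u → BoundedFun u → ∫ x, ruelle φ u x ∂ν = Real.exp p * ∫ x, u x ∂ν)
    {C : Set (MarkovShift A)} (hC : C ∈ boundedCylinders φ) :
    ∫⁻ x, transferOperator shift (expWeight φ) (C.indicator 1) x ∂ν =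
      ENNReal.ofReal (Real.exp p) * ν C := by
  obtain ⟨z, m, rfl, B, hB⟩ := hC
  set C := cylOf z (m + 1)
  have hCclopen : IsClopen C := isClopen_cylOf z _
  have hCm : MeasurableSet C := hCclopen.isOpen.measurableSet
  have hle : ∀ x, transferOperator shift (expWeight φ) (C.indicator 1) x ≤
      ENNReal.ofReal (Real.exp B) :=
    transferOperator_shift_indicator_le (fun y hy => hy 0 m.succ_pos) fun y hy =>
      ENNReal.ofReal_le_ofReal (Real.exp_le_exp.2 (hB ⟨y, hy, rfl⟩))
  have hlt : ∀ x, transferOperator shift (expWeight φ) (C.indicator 1) x < ∞ :=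
    fun x => (hle x).trans_lt ENNReal.ofReal_lt_top
  have hruelle : ∀ x, ruelle φ (C.indicator 1) x =
      (transferOperator shift (expWeight φ) (C.indicator 1) x).toReal := fun x => by
    rw [ruelle_eq_toReal φ (u := C.indicator 1) (Set.indicator_nonneg fun _ _ => zero_le_one)]
    congr with y
    by_cases hy : y ∈ C <;> simp [hy]
  have hreal := hν (C.indicator 1) (hCclopen.continuous_indicator continuous_one)
    ⟨1, fun x => by by_cases hx : x ∈ C <;> simp [hx]⟩
  have hmeas := measurable_transferOperator_shift (measurable_expWeight hφ)
    ((measurable_one (α := ℝ≥0∞)).indicator hCm)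
  simp only [hruelle] at hreal
  rw [integral_toReal hmeas.aemeasurable (ae_of_all _ hlt), integral_indicator_one hCm] at hreal
  have hfin : ∫⁻ x, transferOperator shift (expWeight φ) (C.indicator 1) x ∂ν ≠ ∞ :=
    ((lintegral_mono hle).trans_lt (by simp [ENNReal.mul_lt_top])).ne
  rw [← ENNReal.ofReal_toReal hfin, hreal, ENNReal.ofReal_mul (Real.exp_nonneg p),
    ofReal_measureReal]

theorem isEigenmeasure_expWeight (hφ : Continuous φ) {p : ℝ} {ν : Measure (MarkovShift A)}
    [IsFiniteMeasure ν]
    (hν : ∀ u, Continuous u → BoundedFun u → ∫ x, ruelle φ u x ∂ν = Real.exp p * ∫ x, u x ∂ν) :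
    IsEigenmeasure shift (expWeight φ) (ENNReal.ofReal (Real.exp p)) ν :=
  isEigenmeasure_of_isTopologicalBasis ENNReal.ofReal_ne_top
    (fun _ => measurable_transferOperator_shift (measurable_expWeight hφ))
    (isTopologicalBasis_boundedCylinders hφ) (isPiSystem_boundedCylinders φ)
    fun _ => lintegral_transferOperator_expWeight_indicator hφ hν

theorem IsRPF.le_exp_mul {p : ℝ} {h : MarkovShift A → ℝ} {ν : Measure (MarkovShift A)}
    (hRPF : IsRPF φ p h ν) (hA : TopologicallyTransitive A) (hφ : Continuous φ) {k : ℕ}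
    (hk : 1 ≤ k) {W : ℝ}
    (hW : ∀ n z z', z' ∈ cylOf z (n + k) → birkhoff φ n z ≤ W + birkhoff φ n z')
    {x y : MarkovShift A} (hxy : y ∈ cylOf x k) : h x ≤ Real.exp W * h y := by
  obtain ⟨hcont, hpos, heigen, hprob, hdual, hone⟩ := hRPF
  have hint : Integrable h ν := .of_integral_ne_zero (hone ▸ one_ne_zero)
  refine (ENNReal.ofReal_le_ofReal_iff (mul_nonneg (Real.exp_nonneg W) (hpos y).le)).1 ?_
  rw [ENNReal.ofReal_mul (Real.exp_nonneg W)]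
  refine eigenfunction_le_mul (H := fun x => ENNReal.ofReal (h x)) hA (measurable_expWeight hφ)
    (expWeight_ne_zero φ) (ENNReal.ofReal_pos.2 (Real.exp_pos p)).ne' ENNReal.ofReal_ne_top
    (isEigenmeasure_expWeight hφ hdual) (ENNReal.continuous_ofReal.comp hcont)
    hint.lintegral_lt_top.ne
    (transferOperator_expWeight_of_ruelle_eigenfunction hpos heigen) ENNReal.ofReal_ne_top hk
    (fun n z z' hz => ?_) hxy
  rw [prod_expWeight, prod_expWeight, ← ENNReal.ofReal_mul (Real.exp_nonneg W), ← Real.exp_add]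
  exact ENNReal.ofReal_le_ofReal (Real.exp_le_exp.2 (hW n z z' hz))

theorem IsRPF.abs_log_sub_log_le {p : ℝ} {h : MarkovShift A → ℝ} {ν : Measure (MarkovShift A)}
    (hRPF : IsRPF φ p h ν) (hA : TopologicallyTransitive A) (hφ : Continuous φ) {k : ℕ}
    (hk : 1 ≤ k) {W : ℝ}
    (hW : ∀ n z z', z' ∈ cylOf z (n + k) → |birkhoff φ n z - birkhoff φ n z'| ≤ W)
    {x y : MarkovShift A} (hxy : y ∈ cylOf x k) : |Real.log (h x) - Real.log (h y)| ≤ W := by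
  have hpos := hRPF.2.1
  have hle : ∀ {x y}, y ∈ cylOf x k → Real.log (h x) ≤ W + Real.log (h y) := fun {x y} hxy => by
    rw [← Real.log_exp W, ← Real.log_mul (Real.exp_ne_zero W) (hpos y).ne']
    refine Real.log_le_log (hpos x) (hRPF.le_exp_mul hA hφ hk (fun n z z' hz => ?_) hxy)
    linarith [le_of_abs_le (hW n z z' hz)]
  have hyx : x ∈ cylOf y k := fun i hi => (hxy i hi).symm
  exact abs_sub_le_iff.2 ⟨by linarith [hle hxy], by linarith [hle hyx]⟩

end Ruelle

section Walters

variable {f : MarkovShift A → ℝ}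

theorem birkhoff_const_mul (β : ℝ) (f : MarkovShift A → ℝ) (n : ℕ) (x : MarkovShift A) :
    birkhoff (fun x => β * f x) n x = β * birkhoff f n x :=
  (Finset.mul_sum _ _ _).symm

theorem waltersSup_nonneg (f : MarkovShift A → ℝ) (k : ℕ) : 0 ≤ waltersSup f k :=
  Real.sSup_nonneg fun _ ⟨_, _, _, _, _, hc⟩ => hc ▸ abs_nonneg _

theorem SatisfiesWalters.abs_birkhoff_sub_le (hf : SatisfiesWalters f) {k : ℕ} (hk : 1 ≤ k)
    {n : ℕ} {x y : MarkovShift A} (hxy : y ∈ cylOf x (n + k)) :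
    |birkhoff f n x - birkhoff f n y| ≤ waltersSup f k := by
  rcases n.eq_zero_or_pos with rfl | hn
  · simpa [birkhoff] using waltersSup_nonneg f k
  · exact le_csSup (hf.1 k hk) ⟨n, hn, x, y, fun i hi => (hxy i hi).symm, rfl⟩

theorem SatisfiesWalters.continuous (hf : SatisfiesWalters f) : Continuous f := by
  refine continuous_iff_continuousAt.2 fun x => Metric.tendsto_nhds.2 fun ε hε => ?_
  obtain ⟨k, hkε, hk⟩ := ((hf.2.eventually_lt_const hε).and (eventually_ge_atTop 1)).exists
  filter_upwards [(isClopen_cylOf x (1 + k)).isOpen.mem_nhds (mem_cylOf_self x _)] with y hy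
  have hxy := hf.abs_birkhoff_sub_le hk hy
  simp only [birkhoff, Finset.sum_range_one, Function.iterate_zero, id_eq] at hxy
  exact (abs_sub_comm _ _).trans_le hxy |>.trans_lt hkε

end Walters

theorem variation_of_log_eigenfunction_general (hA : TopologicallyTransitive A)
    {f : MarkovShift A → ℝ} (hf : SatisfiesWalters f) {β p : ℝ} (hβ : β ≠ 0)
    {h : MarkovShift A → ℝ} {ν : Measure (MarkovShift A)}
    (hRPF : IsRPF (fun x => β * f x) p h ν) {k : ℕ} (hk : 1 ≤ k) {x y : MarkovShift A}
    (hxy : ∀ i < k, x.1 i = y.1 i) :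
    |(1 / β) * Real.log (h x) - (1 / β) * Real.log (h y)| ≤ waltersSup f k := by
  have hlog : |Real.log (h x) - Real.log (h y)| ≤ |β| * waltersSup f k := by
    refine hRPF.abs_log_sub_log_le hA (continuous_const.mul hf.continuous) hk
      (fun n z z' hz => ?_) fun i hi => (hxy i hi).symm
    rw [birkhoff_const_mul, birkhoff_const_mul, ← mul_sub, abs_mul]
    gcongr
    exact hf.abs_birkhoff_sub_le hk hz
  rwa [← mul_sub, abs_mul, abs_one_div, one_div, inv_mul_le_iff₀ (abs_pos.2 hβ)]

/-- `Var_k((1/β) log h_β)` is bounded by a constant `M_k` independent of `β`,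
with `M_k → 0` as `k → ∞`. -/
theorem variation_of_log_eigenfunction
    (A : ℕ → ℕ → Bool)
    (hmix : TopologicallyMixing A)
    (hbip : FinitelyPrimitive A)
    (f : MarkovShift A → ℝ)
    (hWalters : SatisfiesWalters f)
    (hVar1 : Var1Finite f)
    (P : ℝ → ℝ)
    (hPfin : HasGurevichPressure f (P 1))
    (h : ℝ → MarkovShift A → ℝ)
    (ν : ℝ → Measure (MarkovShift A))
    (hRPF : ∀ β : ℝ, 0 < β → IsRPF (fun x => β * f x) (P β) (h β) (ν β)) :
    ∃ M : ℕ → ℝ, Tendsto M atTop (𝓝 0) ∧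
      ∀ k : ℕ, 1 ≤ k → ∀ β : ℝ, 0 < β → ∀ x y : MarkovShift A,
        (∀ i < k, x.1 i = y.1 i) →
          |(1 / β) * Real.log (h β x) - (1 / β) * Real.log (h β y)| ≤ M k := by
  exact ⟨waltersSup f, hWalters.2, fun k hk β hβ x y => variation_of_log_eigenfunction_general
    hmix.topologicallyTransitive hWalters hβ.ne' (hRPF β hβ) hk⟩

end MarkovShift
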